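/- Let O be an orbit of the δ-twisted partial conjugation action of W_J on W that contains an element of W^J, and let v ∈ O. Then the following are equivalent: (1) v is minimal in O with respect to the restriction of the Bruhat order, i.e. there is no v' ∈ O with v' < v; (2) v is an element of minimal length in O, i.e. ℓ(v) ≤ ℓ(v') for all v' ∈ O. -/

import Mathlib

open CoxeterSystem

variable {B : Type*} [Finite B] {W : Type*} [Group W] {M : CoxeterMatrix B}

namespace PartialConjugation

/-- The standard parabolic subgroup `W_J` of `W`, generated by the simple
reflections indexed by `J`. -/
def parab (cs : CoxeterSystem M W) (J : Set B) : Subgroup W :=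
  Subgroup.closure (cs.simple '' J)

/-- The simple reflection `s_j` (for `j ∈ J`), viewed as an element of `W_J`. -/
def sJ (cs : CoxeterSystem M W) (J : Set B) (j : B) (hj : j ∈ J) : parab cs J :=
  ⟨cs.simple j, Subgroup.subset_closure ⟨j, hj, rfl⟩⟩

/-- `w ∈ W^J`: `w` is a minimal length representative of its left coset `w W_J`. -/
def IsMinRep (cs : CoxeterSystem M W) (J : Set B) (w : W) : Prop :=
  ∀ v ∈ parab cs J, cs.length w ≤ cs.length (w * v)

variable (cs : CoxeterSystem M W) (J J' : Set B) (δ : parab cs J ≃* parab cs J')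

/-- `δ` carries the set of simple reflections indexed by `J` onto the set of
simple reflections indexed by `J'`. -/
def MapsSimples : Prop :=
  (∀ j, ∀ hj : j ∈ J, ∃ j' ∈ J', (δ (sJ cs J j hj) : W) = cs.simple j') ∧
  (∀ j' ∈ J', ∃ j, ∃ hj : j ∈ J, (δ (sJ cs J j hj) : W) = cs.simple j')

/-- `K` is a `w`-special subset of `J`. -/
def WSpecial (w : W) (K : Set B) : Prop :=
  K ⊆ J ∧ ∀ k ∈ K, ∃ j, ∃ hjJ : j ∈ J, j ∈ K ∧
    w * cs.simple k * w⁻¹ = (δ (sJ cs J j hjJ) : W)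

/-- The set `I(J, w, δ)`: the union of all `w`-special subsets of `J`. -/
def Iset (w : W) : Set B := ⋃₀ {K | WSpecial cs J J' δ w K}

/-- The set `W_J ·_δ V = {δ(u) v u⁻¹ : u ∈ W_J, v ∈ V}`. -/
def orbSet (V : Set W) : Set W :=
  {x | ∃ u : parab cs J, ∃ v ∈ V, x = (δ u : W) * v * (u : W)⁻¹}

/-- The orbit of `x` under the `δ`-twisted partial conjugation action of `W_J`. -/
def orbitOf (x : W) : Set W := orbSet cs J J' δ {x}

/-- The coset `w W_{I(J,w,δ)}`. -/
def coset (w : W) : Set W :=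
  {x | ∃ v ∈ parab cs (Iset cs J J' δ w), x = w * v}

/-- Elementary step `v →_i v'` of `δ`-twisted conjugation: `v' = δ(s_i) v s_i`
with `i ∈ J` and `ℓ(v') ≤ ℓ(v)`. -/
def StepRel (v v' : W) : Prop :=
  ∃ i, ∃ hi : i ∈ J, v' = (δ (sJ cs J i hi) : W) * v * cs.simple i ∧
    cs.length v' ≤ cs.length v

/-- The relation `v →_{J,δ} v'`. -/
def ToRel : W → W → Prop := Relation.ReflTransGen (StepRel cs J J' δ)

/-- The relation `v ≈_{J,δ} v'`. -/
def Approx (v v' : W) : Prop := ToRel cs J J' δ v v' ∧ ToRel cs J J' δ v' v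

/-- The Bruhat order on `W`. -/
def bruhatLE (cs : CoxeterSystem M W) : W → W → Prop :=
  Relation.ReflTransGen
    (fun a b => ∃ t, cs.IsReflection t ∧ b = a * t ∧ cs.length a < cs.length b)

/-- The set of minimal length elements in the orbit of `x`. -/
def orbMin (x : W) : Set W :=
  {y ∈ orbitOf cs J J' δ x | ∀ z ∈ orbitOf cs J J' δ x, cs.length y ≤ cs.length z}


set_option linter.unusedSectionVars false
set_option linter.unusedVariables false

/-! ### Strong exchange -/

section StrongExchange

theorem end_mul {α : Type*} (f g : Function.End α) (p : α) : (f * g) p = f (g p) := rfl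

open scoped Classical in
/-- The generator action on `W × ZMod 2`. -/
noncomputable def act (cs : CoxeterSystem M W) (i : B) : Function.End (W × ZMod 2) :=
  fun p => (cs.simple i * p.1 * cs.simple i, p.2 + if p.1 = cs.simple i then 1 else 0)

theorem act_apply (cs : CoxeterSystem M W) [DecidableEq W] (i : B) (t : W) (e : ZMod 2) :
    act cs i (t, e) =
      (cs.simple i * t * cs.simple i, e + if t = cs.simple i then 1 else 0) := by
  unfold act
  congr

theorem simple_conj_pow (cs : CoxeterSystem M W) (i j : B) (n : ℕ) :
    (cs.simple i * cs.simple j) ^ n * cs.simple j * (cs.simple i * cs.simple j) ^ n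
      = cs.simple j := by
  induction n with
  | zero => simp
  | succ n ih =>
    nth_rw 1 [pow_succ]
    rw [pow_succ']
    generalize hc : (cs.simple i * cs.simple j) ^ n = c at *
    calc _ = c * (cs.simple i * (cs.simple j * cs.simple j) *
            cs.simple i * cs.simple j) * c := by group
      _ = _ := by simpa using ih

theorem act_pow (cs : CoxeterSystem M W) [DecidableEq W] (i j : B) (n : ℕ) (t : W) (e : ZMod 2) :
    ((act cs i * act cs j) ^ n) (t, e) =
      ((cs.simple i * cs.simple j) ^ n * t * ((cs.simple i * cs.simple j) ^ n)⁻¹,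
        e + ∑ k ∈ Finset.range (2 * n),
          if t = cs.simple j * (cs.simple i * cs.simple j) ^ k then (1 : ZMod 2) else 0) := by
  induction n with
  | zero => simp; rfl
  | succ n ih =>
    rw [pow_succ', end_mul, ih, end_mul, act_apply, act_apply]
    have key := simple_conj_pow cs i j n
    generalize hc : (cs.simple i * cs.simple j) ^ n = c at *
    have hc2 : (cs.simple i * cs.simple j) ^ (2 * n) = c * c := by
      rw [two_mul, pow_add, hc]
    have h1 : c * t * c⁻¹ = cs.simple j ↔
        t = cs.simple j * (cs.simple i * cs.simple j) ^ (2 * n) := by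
      rw [hc2]
      constructor
      · intro h
        have : t = c⁻¹ * cs.simple j * c := by rw [← h]; group
        rw [this]; nth_rw 1 [← key]; group
      · intro h
        rw [h]; nth_rw 2 [← key]; group
    have h2 : cs.simple j * (c * t * c⁻¹) * cs.simple j = cs.simple i ↔
        t = cs.simple j * (cs.simple i * cs.simple j) ^ (2 * n + 1) := by
      rw [pow_succ', hc2]
      have e1 : c * (cs.simple i * cs.simple j) = (cs.simple i * cs.simple j) * c := by
        rw [← hc, ← pow_succ, ← pow_succ']
      constructor
      · intro h
        have : t = c⁻¹ * cs.simple j * cs.simple i * cs.simple j * c := by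
          rw [← h]; simp [mul_assoc]
        rw [this]; nth_rw 1 [← key]
        calc _ = cs.simple j * (c * (cs.simple i * cs.simple j)) * c := by group
          _ = _ := by rw [e1]; group
      · intro h
        rw [h]
        calc _ = cs.simple j * c * cs.simple j * ((cs.simple i * cs.simple j) * c)
              * cs.simple j := by group
          _ = cs.simple j * (c * cs.simple j * c) * (cs.simple i * cs.simple j)
              * cs.simple j := by rw [← e1]; group
          _ = _ := by rw [key]; simp [mul_assoc]
    ext1
    · simp only [pow_succ', hc, mul_inv_rev, cs.inv_simple]
      group
    · simp only [h1, h2]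
      rw [show 2 * (n + 1) = 2 * n + 1 + 1 by ring, Finset.sum_range_succ, Finset.sum_range_succ]
      ring

theorem act_liftable (cs : CoxeterSystem M W) : M.IsLiftable (act cs) := by
  classical
  intro i j
  funext ⟨t, e⟩
  rw [act_pow, cs.simple_mul_simple_pow, two_mul, Finset.sum_range_add]
  simp only [pow_add, cs.simple_mul_simple_pow, one_mul, inv_one, mul_one]
  rw [CharTwo.add_self_eq_zero]
  simp; rfl

theorem lift_word (cs : CoxeterSystem M W) [DecidableEq W] (ω : List B) (t : W) (e : ZMod 2) :
    cs.lift ⟨act cs, act_liftable cs⟩ (cs.wordProd ω) (t, e) =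
      (cs.wordProd ω * t * (cs.wordProd ω)⁻¹, e + (cs.rightInvSeq ω).count t) := by
  induction ω with
  | nil => simp; rfl
  | cons i ω ih =>
    rw [cs.wordProd_cons, map_mul, end_mul, ih,
      cs.lift_apply_simple, act_apply, rightInvSeq, List.count_cons]
    have : (cs.wordProd ω * t * (cs.wordProd ω)⁻¹ = cs.simple i) ↔
      ((cs.wordProd ω)⁻¹ * cs.simple i * cs.wordProd ω = t) := by
      constructor
      · intro h; rw [← h]; group
      · intro h; rw [← h]; group
    ext1
    · simp [mul_assoc]
    · simp only [this, beq_iff_eq]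
      push_cast
      ring

theorem lift_refl (cs : CoxeterSystem M W) (t : W) (ht : cs.IsReflection t) (e : ZMod 2) :
    cs.lift ⟨act cs, act_liftable cs⟩ t (t, e) = (t, e + 1) := by
  classical
  obtain ⟨u, i, rfl⟩ := ht
  obtain ⟨ω, rfl⟩ := cs.wordProd_surjective u
  set f := cs.lift ⟨act cs, act_liftable cs⟩ with hf
  have h1 : ∀ x e, f (cs.wordProd ω) (x, e) =
      (cs.wordProd ω * x * (cs.wordProd ω)⁻¹, e + (cs.rightInvSeq ω).count x) :=
    fun x e => lift_word cs ω x e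
  have h2 : ∀ p, f (cs.wordProd ω)⁻¹ (f (cs.wordProd ω) p) = p := by
    intro p
    have : f ((cs.wordProd ω)⁻¹ * cs.wordProd ω) p = p := by
      rw [inv_mul_cancel, map_one]; rfl
    rwa [map_mul] at this
  obtain ⟨c, hc⟩ : ∃ c : ZMod 2, c = ((cs.rightInvSeq ω).count (cs.simple i) : ℕ) := ⟨_, rfl⟩
  have h3 := h2 (cs.simple i, e - c)
  rw [h1, ← hc, sub_add_cancel] at h3
  rw [map_mul, map_mul, end_mul, h3, end_mul, hf, cs.lift_apply_simple, act_apply, ← hf, h1]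
  simp only [cs.simple_mul_simple_self, one_mul, if_true, ← hc]
  ext1
  · rfl
  · show e - c + 1 + c = e + 1
    ring

theorem strong_exchange (cs : CoxeterSystem M W) (ω : List B) (t : W) (ht : cs.IsReflection t)
    (h : cs.length (cs.wordProd ω * t) < cs.length (cs.wordProd ω)) :
    ∃ k < ω.length, cs.wordProd ω * t = cs.wordProd (ω.eraseIdx k) := by
  classical
  have hmem : t ∈ cs.rightInvSeq ω := by
    by_contra hn
    obtain ⟨ω', hr, hω'⟩ := cs.exists_isReduced (cs.wordProd ω * t)
    have e1 := lift_word cs ω' t 0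
    rw [← hω', map_mul, end_mul, lift_refl cs t ht,
      lift_word, List.count_eq_zero_of_not_mem hn] at e1
    have e2 := congrArg Prod.snd e1
    have hm : t ∈ cs.rightInvSeq ω' := by
      by_contra hn'
      rw [List.count_eq_zero_of_not_mem hn'] at e2
      simp at e2
    have := (cs.isRightInversion_of_mem_rightInvSeq hr hm).2
    rw [← hω', mul_assoc, ht.mul_self, mul_one] at this
    omega
  obtain ⟨k, hk, hkt⟩ := List.mem_iff_getElem.mp hmem
  refine ⟨k, by simpa using hk, ?_⟩
  rw [← cs.wordProd_mul_getD_rightInvSeq, List.getD_eq_getElem _ _ hk, hkt]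

end StrongExchange

/-! ### Bruhat order -/

theorem bruhat_edge (cs : CoxeterSystem M W) {x t : W} (ht : cs.IsReflection t)
    (h : cs.length x < cs.length (x * t)) : bruhatLE cs x (x * t) :=
  Relation.ReflTransGen.single ⟨t, ht, rfl, h⟩

theorem bruhat_len (cs : CoxeterSystem M W) {x y : W} (h : bruhatLE cs x y) :
    x = y ∨ cs.length x < cs.length y := by
  induction h with
  | refl => exact Or.inl rfl
  | tail _ h2 ih =>
    obtain ⟨t, _, _, hl⟩ := h2
    rcases ih with rfl | ih
    · exact Or.inr hl
    · exact Or.inr (ih.trans hl)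

theorem bruhat_simple_mul (cs : CoxeterSystem M W) {x : W} {i : B}
    (h : cs.length x < cs.length (cs.simple i * x)) : bruhatLE cs x (cs.simple i * x) := by
  have e : cs.simple i * x = x * (x⁻¹ * cs.simple i * x⁻¹⁻¹) := by simp [mul_assoc]
  rw [e] at h ⊢
  exact bruhat_edge cs ((cs.isReflection_simple i).conj x⁻¹) h

theorem bruhat_simple_mul' (cs : CoxeterSystem M W) {x : W} {i : B}
    (h : cs.length (cs.simple i * x) < cs.length x) : bruhatLE cs (cs.simple i * x) x := by
  have := bruhat_simple_mul cs (x := cs.simple i * x) (i := i) (by simpa using h)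
  simpa using this

theorem bruhat_inv (cs : CoxeterSystem M W) {x y : W} (h : bruhatLE cs x y) :
    bruhatLE cs x⁻¹ y⁻¹ := by
  induction h with
  | refl => exact Relation.ReflTransGen.refl
  | @tail b c _ h2 ih =>
    refine ih.tail ?_
    obtain ⟨t, ht, rfl, hl⟩ := h2
    refine ⟨b * t * b⁻¹, ht.conj b, ?_, by rwa [cs.length_inv, cs.length_inv]⟩
    rw [mul_inv_rev, ht.inv]; group

/-- Lifting for one edge in the critical case. -/
theorem edge_crit (cs : CoxeterSystem M W) {x t : W} {i : B} (ht : cs.IsReflection t)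
    (h : cs.length x < cs.length (x * t)) (hx : cs.length x < cs.length (cs.simple i * x)) :
    cs.length (cs.simple i * x) < cs.length (cs.simple i * (x * t)) ∨
      cs.simple i * (x * t) = x := by
  by_contra hcon
  push Not at hcon
  obtain ⟨h1, h2⟩ := hcon
  have h3 := ht.length_mul_left_ne (cs.simple i * x)
  rw [mul_assoc] at h3
  obtain ⟨ω, hr, hω⟩ := cs.exists_isReduced x
  have hw : cs.simple i * x = cs.wordProd (i :: ω) := by rw [cs.wordProd_cons, ← hω]
  obtain ⟨k, hk, hk2⟩ := strong_exchange cs (i :: ω) t ht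
    (by rw [← hw, mul_assoc]; omega)
  rw [← hw, mul_assoc] at hk2
  cases k with
  | zero => exact h2 (by rw [hk2, hω]; rfl)
  | succ k =>
    rw [List.eraseIdx_cons_succ, cs.wordProd_cons, mul_right_inj] at hk2
    rw [hk2] at h
    have h4 := cs.length_wordProd_le (ω.eraseIdx k)
    have h5 : (ω.eraseIdx k).length ≤ ω.length := List.length_eraseIdx_le _ _
    have h6 : cs.length x = ω.length := by rw [hω]; exact hr
    omega

/-- The smaller of `z` and `s_i z`. -/
noncomputable def lo (cs : CoxeterSystem M W) (i : B) (z : W) : W :=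
  if cs.length (cs.simple i * z) < cs.length z then cs.simple i * z else z

theorem lo_mono_edge (cs : CoxeterSystem M W) (i : B) {x t : W} (ht : cs.IsReflection t)
    (h : cs.length x < cs.length (x * t)) : bruhatLE cs (lo cs i x) (lo cs i (x * t)) := by
  have hxy := bruhat_edge cs ht h
  have lx := cs.length_simple_mul x i
  have ly := cs.length_simple_mul (x * t) i
  unfold lo
  split_ifs with h1 h2 h2
  · rw [← mul_assoc] at *
    apply bruhat_edge cs ht
    omega
  · exact (bruhat_simple_mul' cs h1).trans hxy
  · rcases edge_crit cs (i := i) ht h (by omega) with h3 | h3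
    · refine (bruhat_simple_mul cs (i := i) (by omega)).trans ?_
      rw [← mul_assoc] at *
      exact bruhat_edge cs ht h3
    · rw [h3]; exact Relation.ReflTransGen.refl
  · exact hxy

theorem lo_mono (cs : CoxeterSystem M W) (i : B) {x y : W} (h : bruhatLE cs x y) :
    bruhatLE cs (lo cs i x) (lo cs i y) := by
  induction h with
  | refl => exact Relation.ReflTransGen.refl
  | tail _ h2 ih =>
    obtain ⟨t, ht, rfl, hl⟩ := h2
    exact Relation.ReflTransGen.trans ih (lo_mono_edge cs i ht hl)

/-- The larger of `z` and `s_i z`. -/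
noncomputable def hi (cs : CoxeterSystem M W) (i : B) (z : W) : W :=
  if cs.length (cs.simple i * z) < cs.length z then z else cs.simple i * z

theorem hi_mono_edge (cs : CoxeterSystem M W) (i : B) {x t : W} (ht : cs.IsReflection t)
    (h : cs.length x < cs.length (x * t)) : bruhatLE cs (hi cs i x) (hi cs i (x * t)) := by
  have hxy := bruhat_edge cs ht h
  have lx := cs.length_simple_mul x i
  have ly := cs.length_simple_mul (x * t) i
  unfold hi
  split_ifs with h1 h2 h2
  · exact hxy
  · exact Relation.ReflTransGen.trans hxy (bruhat_simple_mul cs (by omega))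
  · rcases edge_crit cs (i := i) ht h (by omega) with h3 | h3
    · refine Relation.ReflTransGen.trans ?_ (bruhat_simple_mul' cs h2)
      rw [← mul_assoc] at *
      exact bruhat_edge cs ht h3
    · have : cs.simple i * x = x * t := by
        calc cs.simple i * x = cs.simple i * (cs.simple i * (x * t)) := by rw [h3]
          _ = x * t := by simp
      rw [this]; exact Relation.ReflTransGen.refl
  · rw [← mul_assoc] at *
    apply bruhat_edge cs ht
    omega

theorem hi_mono (cs : CoxeterSystem M W) (i : B) {x y : W} (h : bruhatLE cs x y) :
    bruhatLE cs (hi cs i x) (hi cs i y) := by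
  induction h with
  | refl => exact Relation.ReflTransGen.refl
  | tail _ h2 ih =>
    obtain ⟨t, ht, rfl, hl⟩ := h2
    exact Relation.ReflTransGen.trans ih (hi_mono_edge cs i ht hl)

theorem le_hi (cs : CoxeterSystem M W) (i : B) (x : W) :
    bruhatLE cs (cs.simple i * x) (hi cs i x) := by
  unfold hi
  split_ifs with h
  · exact bruhat_simple_mul' cs h
  · exact Relation.ReflTransGen.refl

theorem lo_le (cs : CoxeterSystem M W) (i : B) (x : W) :
    bruhatLE cs (lo cs i x) (cs.simple i * x) := by
  have := cs.length_simple_mul x i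
  unfold lo
  split_ifs with h
  · exact Relation.ReflTransGen.refl
  · exact bruhat_simple_mul cs (by omega)

theorem bruhat_mul_simple (cs : CoxeterSystem M W) {x y : W} {i : B} (h : bruhatLE cs x y)
    (hy : cs.length y < cs.length (y * cs.simple i)) :
    bruhatLE cs (x * cs.simple i) (y * cs.simple i) := by
  have h1 := hi_mono cs i (bruhat_inv cs h)
  have h2 : hi cs i y⁻¹ = cs.simple i * y⁻¹ := by
    unfold hi
    have : cs.length (cs.simple i * y⁻¹) = cs.length (y * cs.simple i) := by
      rw [← cs.length_inv]; simp
    rw [this, cs.length_inv, if_neg (by omega)]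
  rw [h2] at h1
  have h3 := bruhat_inv cs (Relation.ReflTransGen.trans (le_hi cs i x⁻¹) h1)
  simpa using h3

theorem bruhat_subword (cs : CoxeterSystem M W) (w : W) (K : List B) :
    cs.length (w * cs.wordProd K) = cs.length w + K.length → ∀ K', K'.Sublist K →
      bruhatLE cs (w * cs.wordProd K') (w * cs.wordProd K) := by
  induction K using List.reverseRecOn with
  | nil =>
    intro _ K' h
    rw [List.sublist_nil.mp h]; exact Relation.ReflTransGen.refl
  | append_singleton K j ih =>
    intro hl K' h
    obtain ⟨l1, l2, rfl, h1, h2⟩ := List.sublist_append_iff.mp h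
    simp only [cs.wordProd_append, cs.wordProd_singleton, List.length_append,
      List.length_singleton, ← mul_assoc] at hl ⊢
    have a1 := cs.length_mul_simple (w * cs.wordProd K) j
    have a2 := cs.length_mul_le w (cs.wordProd K)
    have a3 := cs.length_wordProd_le K
    have ih' := ih (by omega) l1 h1
    rcases List.sublist_singleton.mp h2 with rfl | rfl
    · simp only [cs.wordProd_nil, mul_one]
      refine Relation.ReflTransGen.trans ih' (bruhat_edge cs (cs.isReflection_simple j) (by omega))
    · simp only [cs.wordProd_singleton]
      exact bruhat_mul_simple cs ih' (by omega)

/-! ### The downward action of a word -/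

/-- Downward Demazure action of a word from the left. -/
noncomputable def dn (cs : CoxeterSystem M W) : List B → W → W
  | [], y => y
  | i :: L, y => lo cs i (dn cs L y)

theorem dn_mono (cs : CoxeterSystem M W) (L : List B) {x y : W} (h : bruhatLE cs x y) :
    bruhatLE cs (dn cs L x) (dn cs L y) := by
  induction L with
  | nil => exact h
  | cons i L ih => exact lo_mono cs i ih

theorem dn_le (cs : CoxeterSystem M W) (L : List B) (y : W) :
    bruhatLE cs (dn cs L y) (cs.wordProd L * y) := by
  induction L with
  | nil => rw [cs.wordProd_nil, one_mul]; exact Relation.ReflTransGen.refl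
  | cons i L ih =>
    rw [cs.wordProd_cons, mul_assoc]
    exact Relation.ReflTransGen.trans (lo_mono cs i ih) (lo_le cs i _)

theorem dn_sub (cs : CoxeterSystem M W) (d : B → B) (L : List B) (y : W) :
    ∃ L' : List B, L'.Sublist L ∧ dn cs (L.map d) y = cs.wordProd (L'.map d) * y ∧
      dn cs (L'.map d) y = dn cs (L.map d) y ∧
      cs.length (dn cs (L.map d) y) + L'.length = cs.length y := by
  induction L with
  | nil => exact ⟨[], List.Sublist.refl _, by simp [dn]⟩
  | cons i L ih =>
    obtain ⟨L', h1, h2, h3, h4⟩ := ih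
    have a := cs.length_simple_mul (dn cs (L.map d) y) (d i)
    by_cases h : cs.length (cs.simple (d i) * dn cs (L.map d) y) < cs.length (dn cs (L.map d) y)
    · refine ⟨i :: L', h1.cons_cons i, ?_, ?_, ?_⟩
      · simp only [List.map_cons, dn, lo, if_pos h, cs.wordProd_cons, mul_assoc, ← h2]
      · simp only [List.map_cons, dn, h3]
      · simp only [List.map_cons, dn, lo, if_pos h, List.length_cons]
        omega
    · refine ⟨L', h1.cons i, ?_, ?_, ?_⟩
      · simp only [List.map_cons, dn, lo, if_neg h]; exact h2
      · simp only [List.map_cons, dn, lo, if_neg h, h3]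
      · simp only [List.map_cons, dn, lo, if_neg h, h4]

/-! ### Words in `J` -/

/-- `L` is a word in `J` of minimal length among the words in `J` with the same product. -/
def JRed (cs : CoxeterSystem M W) (J : Set B) (L : List B) : Prop :=
  (∀ j ∈ L, j ∈ J) ∧ ∀ K : List B, (∀ j ∈ K, j ∈ J) → cs.wordProd K = cs.wordProd L →
    L.length ≤ K.length

theorem word_mem (cs : CoxeterSystem M W) (J : Set B) (L : List B) (h : ∀ j ∈ L, j ∈ J) :
    cs.wordProd L ∈ parab cs J := by
  induction L with
  | nil => simp
  | cons i L ih =>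
    rw [cs.wordProd_cons]
    exact mul_mem (Subgroup.subset_closure ⟨i, h i (by simp), rfl⟩)
      (ih fun j hj => h j (by simp [hj]))

theorem exists_word (cs : CoxeterSystem M W) (J : Set B) (u : W) (hu : u ∈ parab cs J) :
    ∃ L : List B, (∀ j ∈ L, j ∈ J) ∧ cs.wordProd L = u := by
  unfold parab at hu
  induction hu using Subgroup.closure_induction with
  | mem x hx =>
    obtain ⟨j, hj, rfl⟩ := hx
    exact ⟨[j], by simpa using hj, by simp⟩
  | one => exact ⟨[], by simp, by simp⟩
  | mul x y _ _ hx hy =>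
    obtain ⟨L, h1, rfl⟩ := hx
    obtain ⟨K, h2, rfl⟩ := hy
    refine ⟨L ++ K, ?_, cs.wordProd_append _ _⟩
    intro j hj
    rcases List.mem_append.mp hj with h | h
    · exact h1 j h
    · exact h2 j h
  | inv x _ hx =>
    obtain ⟨L, h1, rfl⟩ := hx
    exact ⟨L.reverse, by simpa using h1, by simp⟩

theorem exists_jred (cs : CoxeterSystem M W) (J : Set B) (u : W) (hu : u ∈ parab cs J) :
    ∃ L : List B, JRed cs J L ∧ cs.wordProd L = u := by
  classical
  have hex : ∃ n, ∃ L : List B, L.length = n ∧ (∀ j ∈ L, j ∈ J) ∧ cs.wordProd L = u := by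
    obtain ⟨L, h1, h2⟩ := exists_word cs J u hu
    exact ⟨_, L, rfl, h1, h2⟩
  obtain ⟨L, h0, h1, h2⟩ := Nat.find_spec hex
  refine ⟨L, ⟨h1, fun K hK hKL => ?_⟩, h2⟩
  rw [h0]
  exact Nat.find_min' hex ⟨K, rfl, hK, hKL.trans h2⟩

theorem JRed.reverse {cs : CoxeterSystem M W} {J : Set B} {L : List B} (h : JRed cs J L) :
    JRed cs J L.reverse := by
  refine ⟨by simpa using h.1, fun K hK hKL => ?_⟩
  have := h.2 K.reverse (by simpa using hK) (by simp [hKL])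
  simpa using this

theorem length_add (cs : CoxeterSystem M W) (J : Set B) (w : W) (hw : IsMinRep cs J w)
    (L : List B) : JRed cs J L → cs.length (w * cs.wordProd L) = cs.length w + L.length := by
  induction L using List.reverseRecOn with
  | nil => intro _; simp
  | append_singleton K j ih =>
    intro hL
    have hKJ : ∀ i ∈ K, i ∈ J := fun i hi => hL.1 i (by simp [hi])
    have hjJ : j ∈ J := hL.1 j (by simp)
    have hK : JRed cs J K := by
      refine ⟨hKJ, fun K' h1 h2 => ?_⟩
      have := hL.2 (K' ++ [j]) (by
        intro i hi
        rcases List.mem_append.mp hi with h | h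
        · exact h1 i h
        · rw [List.mem_singleton.mp h]; exact hjJ) (by simp [cs.wordProd_append, h2])
      simpa using this
    have ihK := ih hK
    rw [cs.wordProd_append, cs.wordProd_singleton, ← mul_assoc, List.length_append,
      List.length_singleton]
    rcases cs.length_mul_simple (w * cs.wordProd K) j with h | h
    · omega
    exfalso
    obtain ⟨ω, hr, hω⟩ := cs.exists_isReduced w
    have hwl : cs.length w = ω.length := by rw [hω]; exact hr
    have hword : w * cs.wordProd K = cs.wordProd (ω ++ K) := by rw [cs.wordProd_append, ← hω]
    obtain ⟨k, hk, hke⟩ := strong_exchange cs (ω ++ K) (cs.simple j) (cs.isReflection_simple j)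
      (by rw [← hword]; omega)
    by_cases hkω : k < ω.length
    · rw [List.eraseIdx_append_of_lt_length hkω, cs.wordProd_append, cs.wordProd_append,
        ← hω] at hke
      have h1 := hw (cs.wordProd K * cs.simple j * (cs.wordProd K)⁻¹) (by
        have a := word_mem cs J K hKJ
        exact mul_mem (mul_mem a (Subgroup.subset_closure ⟨j, hjJ, rfl⟩)) (inv_mem a))
      have h2 : w * (cs.wordProd K * cs.simple j * (cs.wordProd K)⁻¹) =
          cs.wordProd (ω.eraseIdx k) := by
        rw [← mul_assoc, ← mul_assoc, hke]; group
      rw [h2] at h1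
      have h3 := cs.length_wordProd_le (ω.eraseIdx k)
      have h4 := List.length_eraseIdx_add_one hkω
      omega
    · rw [List.eraseIdx_append_of_length_le (by omega), cs.wordProd_append, cs.wordProd_append,
        mul_assoc, mul_right_inj] at hke
      have h1 := hL.2 (K.eraseIdx (k - ω.length))
        (fun i hi => hKJ i (List.mem_of_mem_eraseIdx hi))
        (by rw [cs.wordProd_append, cs.wordProd_singleton, hke])
      have h2 : (K.eraseIdx (k - ω.length)).length ≤ K.length := List.length_eraseIdx_le _ _
      simp at h1
      omega

theorem key (cs : CoxeterSystem M W) (J : Set B) (w : W) (hw : IsMinRep cs J w) (d : B → B)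
    (hd : ∀ K K' : List B, (∀ j ∈ K, j ∈ J) → (∀ j ∈ K', j ∈ J) →
      cs.wordProd K = cs.wordProd K' → cs.wordProd (K.map d) = cs.wordProd (K'.map d)) (n : ℕ) :
    ∀ L : List B, L.length = n → JRed cs J L →
      ∃ K : List B, (∀ j ∈ K, j ∈ J) ∧
        bruhatLE cs (cs.wordProd (K.map d) * w * (cs.wordProd K)⁻¹)
          (dn cs (L.map d) (w * (cs.wordProd L)⁻¹)) ∧
        cs.length (cs.wordProd (K.map d) * w * (cs.wordProd K)⁻¹) ≤ cs.length w := by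
  induction n using Nat.strong_induction_on with
  | _ n ih =>
    intro L hLn hL
    obtain ⟨L', h1, h2, h3, h4⟩ := dn_sub cs d L (w * (cs.wordProd L)⁻¹)
    have hadd := length_add cs J w hw L.reverse hL.reverse
    have hsub := bruhat_subword cs w L.reverse hadd L'.reverse h1.reverse
    rw [cs.wordProd_reverse] at hadd hsub
    rw [cs.wordProd_reverse] at hsub
    rw [List.length_reverse] at hadd
    by_cases hlen : L'.length = L.length
    · have : L' = L := h1.eq_of_length hlen
      subst this
      refine ⟨L', hL.1, ?_, ?_⟩
      · rw [h2, mul_assoc]; exact Relation.ReflTransGen.refl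
      · rw [mul_assoc, ← h2]; omega
    · have hlt : L'.length < n := by have := h1.length_le; omega
      have hJ' : ∀ j ∈ L', j ∈ J := fun j hj => hL.1 j (h1.subset hj)
      have hR : JRed cs J L' := by
        refine ⟨hJ', fun K hK hKL => ?_⟩
        have a := hd K L' hK hJ' hKL
        have b := cs.length_wordProd_le (K.map d)
        rw [a, List.length_map] at b
        have c := cs.length_le_length_mul_add_left (cs.wordProd (L'.map d)) (w * (cs.wordProd L)⁻¹)
        rw [← h2] at c
        omega
      obtain ⟨K, k1, k2, k3⟩ := ih _ hlt L' rfl hR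
      refine ⟨K, k1, k2.trans ?_, k3⟩
      rw [← h3]
      exact dn_mono cs _ hsub

/-- Let `O` be a `δ`-twisted `W_J`-conjugacy class containing
an element of `W^J`, and let `v ∈ O`. Then `v` is minimal in `O` for the
Bruhat order iff `v` is of minimal length in `O`. -/
theorem stmt8 (hδ : MapsSimples cs J J' δ) (z : W)
    (hz : ∃ x ∈ orbitOf cs J J' δ z, IsMinRep cs J x)
    (v : W) (hv : v ∈ orbitOf cs J J' δ z) :
    (¬ ∃ v' ∈ orbitOf cs J J' δ z, bruhatLE cs v' v ∧ v' ≠ v) ↔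
      (∀ v' ∈ orbitOf cs J J' δ z, cs.length v ≤ cs.length v') := by
  classical
  obtain ⟨w, ⟨u₀, z', hz', hw0⟩, hw⟩ := hz
  rw [Set.mem_singleton_iff] at hz'
  subst hz'
  have hdex : ∀ j : B, ∃ j' : B, ∀ hj : j ∈ J, (δ (sJ cs J j hj) : W) = cs.simple j' := by
    intro j
    by_cases hj : j ∈ J
    · obtain ⟨j', _, h⟩ := hδ.1 j hj
      exact ⟨j', fun _ => h⟩
    · exact ⟨j, fun h => absurd h hj⟩
  choose d hd using hdex
  have hword : ∀ L : List B, (∀ j ∈ L, j ∈ J) → ∀ u : parab cs J, (u : W) = cs.wordProd L →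
      (δ u : W) = cs.wordProd (L.map d) := by
    intro L
    induction L with
    | nil =>
      intro _ u hu
      have : u = 1 := Subtype.ext (by simpa using hu)
      simp [this]
    | cons i L ih =>
      intro hL u hu
      have hi : i ∈ J := hL i (by simp)
      have hL' : ∀ j ∈ L, j ∈ J := fun j hj => hL j (by simp [hj])
      have : u = sJ cs J i hi * ⟨cs.wordProd L, word_mem cs J L hL'⟩ :=
        Subtype.ext (by rw [hu, cs.wordProd_cons]; rfl)
      rw [this, map_mul, Subgroup.coe_mul, hd i hi, ih hL' _ rfl, List.map_cons, cs.wordProd_cons]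
  have hdK : ∀ K K' : List B, (∀ j ∈ K, j ∈ J) → (∀ j ∈ K', j ∈ J) →
      cs.wordProd K = cs.wordProd K' → cs.wordProd (K.map d) = cs.wordProd (K'.map d) := by
    intro K K' h1 h2 h
    rw [← hword K h1 ⟨_, word_mem cs J K h1⟩ rfl, hword K' h2 _ h]
  have horb1 : ∀ x ∈ orbitOf cs J J' δ z', ∃ u : parab cs J, x = (δ u : W) * w * (u : W)⁻¹ := by
    rintro x ⟨u, z, hz, rfl⟩
    rw [Set.mem_singleton_iff] at hz
    subst hz
    refine ⟨u * u₀⁻¹, ?_⟩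
    rw [hw0]
    simp [mul_assoc]
  have horb2 : ∀ u : parab cs J, (δ u : W) * w * (u : W)⁻¹ ∈ orbitOf cs J J' δ z' := by
    intro u
    refine ⟨u * u₀, z', rfl, ?_⟩
    rw [hw0]
    simp [mul_assoc]
  have hmin : ∀ x ∈ orbitOf cs J J' δ z', cs.length w ≤ cs.length x := by
    intro x hx
    obtain ⟨u, rfl⟩ := horb1 x hx
    obtain ⟨L, hL, hLu⟩ := exists_jred cs J u u.2
    have h1 := length_add cs J w hw _ hL.reverse
    rw [cs.wordProd_reverse, hLu, List.length_reverse] at h1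
    have h2 := cs.length_le_length_mul_add_left (δ u : W) (w * (u : W)⁻¹)
    have h3 := cs.length_wordProd_le (L.map d)
    rw [← hword L hL.1 u hLu.symm, List.length_map] at h3
    rw [mul_assoc]
    omega
  constructor
  · intro hno v' hv'
    obtain ⟨u, hu⟩ := horb1 v hv
    obtain ⟨L, hL, hLu⟩ := exists_jred cs J u u.2
    obtain ⟨K, k1, k2, k3⟩ := key cs J w hw d hdK _ L rfl hL
    have hle := Relation.ReflTransGen.trans k2 (dn_le cs (L.map d) _)
    rw [← hword L hL.1 u hLu.symm, hLu, ← mul_assoc, ← hu] at hle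
    have hmem := horb2 ⟨_, word_mem cs J K k1⟩
    rw [hword K k1 _ rfl] at hmem
    by_cases he : cs.wordProd (K.map d) * w * (cs.wordProd K)⁻¹ = v
    · rw [← he]
      exact k3.trans (hmin v' hv')
    · exact absurd ⟨_, hmem, hle, he⟩ hno
  · rintro h ⟨v', hv', hle, hne⟩
    rcases bruhat_len cs hle with e | e
    · exact hne e
    · have := h v' hv'
      omega

end PartialConjugation
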